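/- arXiv:2107.08810 — 4 statements merged into one kernel-verified Lean document; each statement's English description precedes it below -/
import Mathlib

section
/- Let a > 0 and γ > 3/2, and let P(ρ) = a(ρ^γ − γρ + γ − 1)/(γ − 1) be the relative pressure potential. Then there exist constants c₁, c₂ > 0 (depending only on a and γ) such that for every ρ ≥ 0: if |ρ − 1| < 1/2 then c₁ (ρ − 1)² ≤ P(ρ) ≤ c₂ (ρ − 1)², and if |ρ − 1| ≥ 1/2 then c₁ |ρ − 1|^γ ≤ P(ρ) ≤ c₂ |ρ − 1|^γ. -/
open Set

/-- If `f'' ≥ 0` on an interval around a critical point `x`, then `f x ≤ f y` there. -/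
lemma le_of_hasDerivAt_two_nonneg {f f' f'' : ℝ → ℝ} {u v x y : ℝ} (hx : x ∈ Ioo u v)
    (hy : y ∈ Icc u v) (hf : ∀ z ∈ Icc u v, HasDerivAt f (f' z) z)
    (hf' : ∀ z ∈ Icc u v, HasDerivAt f' (f'' z) z) (hf'' : ∀ z ∈ Icc u v, 0 ≤ f'' z)
    (hx0 : f' x = 0) : f x ≤ f y := by
  have hconv : ConvexOn ℝ (Icc u v) f :=
    convexOn_of_hasDerivWithinAt2_nonneg (convex_Icc u v)
      (fun z hz => (hf z hz).continuousAt.continuousWithinAt)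
      (fun z hz => (hf z (interior_subset hz)).hasDerivWithinAt)
      (fun z hz => (hf' z (interior_subset hz)).hasDerivWithinAt)
      (fun z hz => hf'' z (interior_subset hz))
  have hd : HasDerivAt f 0 x := hx0 ▸ hf x (Ioo_subset_Icc_self hx)
  exact hconv.isMinOn_of_rightDeriv_eq_zero (by rwa [interior_Icc])
    (hd.hasDerivWithinAt.derivWithin (uniqueDiffWithinAt_Ioi x)) hy

/-- Strict Bernoulli inequality, written at `ρ = 1 + s`. -/
lemma rpow_sub_tangent_pos {γ ρ : ℝ} (hγ : 1 < γ) (hρ : 0 ≤ ρ) (hρ1 : ρ ≠ 1) :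
    0 < ρ ^ γ - γ * ρ + γ - 1 := by
  have h := one_add_mul_self_lt_rpow_one_add (s := ρ - 1) (by linarith) (sub_ne_zero.mpr hρ1) hγ
  rw [add_sub_cancel] at h
  linarith

/-- A positive continuous function on a compact interval is bounded below by a positive constant. -/
lemma exists_pos_le_of_continuousOn_Icc {f : ℝ → ℝ} {u v : ℝ} (huv : u ≤ v)
    (hf : ContinuousOn f (Icc u v)) (hpos : ∀ x ∈ Icc u v, 0 < f x) :
    ∃ m, 0 < m ∧ ∀ x ∈ Icc u v, m ≤ f x := by
  obtain ⟨x, hx, hmin⟩ := isCompact_Icc.exists_isMinOn (nonempty_Icc.mpr huv) hf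
  exact ⟨f x, hpos x hx, fun y hy => hmin hy⟩

lemma rpow_sub_tangent_near_one {γ : ℝ} (hγ : 1 < γ) :
    ∃ m M : ℝ, 0 < m ∧ 0 < M ∧ ∀ ρ ∈ Icc (1 / 2 : ℝ) (3 / 2),
      m * (ρ - 1) ^ 2 ≤ ρ ^ γ - γ * ρ + γ - 1 ∧ ρ ^ γ - γ * ρ + γ - 1 ≤ M * (ρ - 1) ^ 2 := by
  have hne : ∀ z ∈ Icc (1 / 2 : ℝ) (3 / 2), z ≠ 0 := fun z hz => by linarith [hz.1]
  have hpos : ∀ z ∈ Icc (1 / 2 : ℝ) (3 / 2), 0 < γ * ((γ - 1) * z ^ (γ - 1 - 1)) := fun z hz =>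
    mul_pos (by linarith) (mul_pos (by linarith) (Real.rpow_pos_of_pos (by linarith [hz.1]) _))
  have hcont : ContinuousOn (fun z : ℝ => γ * ((γ - 1) * z ^ (γ - 1 - 1)))
      (Icc (1 / 2 : ℝ) (3 / 2)) := fun z hz =>
    (((Real.continuousAt_rpow_const z _ (Or.inl (hne z hz))).const_mul _).const_mul
      _).continuousWithinAt
  obtain ⟨m, hm, hmle⟩ := exists_pos_le_of_continuousOn_Icc (by norm_num) hcont hpos
  obtain ⟨w, hw, hmax⟩ := isCompact_Icc.exists_isMaxOn ⟨1, by norm_num⟩ hcont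
  set M := γ * ((γ - 1) * w ^ (γ - 1 - 1))
  have hF : ∀ z ∈ Icc (1 / 2 : ℝ) (3 / 2),
      HasDerivAt (fun z : ℝ => z ^ γ - γ * z + γ - 1) (γ * z ^ (γ - 1) - γ) z := fun z hz => by
    simpa using (((Real.hasDerivAt_rpow_const (p := γ) (Or.inl (hne z hz))).sub
      ((hasDerivAt_id z).const_mul γ)).add_const γ).sub_const 1
  have hF' : ∀ z ∈ Icc (1 / 2 : ℝ) (3 / 2),
      HasDerivAt (fun z : ℝ => γ * z ^ (γ - 1) - γ) (γ * ((γ - 1) * z ^ (γ - 1 - 1))) z :=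
    fun z hz =>
      ((Real.hasDerivAt_rpow_const (p := γ - 1) (Or.inl (hne z hz))).const_mul γ).sub_const γ
  have hQ : ∀ c z : ℝ, HasDerivAt (fun z : ℝ => c / 2 * (z - 1) ^ 2) (c * (z - 1)) z :=
    fun c z => by
      refine ((((hasDerivAt_id' z).sub_const 1).pow 2).const_mul (c / 2)).congr_deriv ?_
      norm_num
      ring
  have hQ' : ∀ c z : ℝ, HasDerivAt (fun z : ℝ => c * (z - 1)) c z := fun c z => by
    simpa using ((hasDerivAt_id z).sub_const 1).const_mul c
  refine ⟨m / 2, M / 2, half_pos hm, half_pos (hpos w hw), fun ρ hρ => ⟨?_, ?_⟩⟩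
  · have h := le_of_hasDerivAt_two_nonneg (x := 1) (by norm_num) hρ
      (fun z hz => (hF z hz).sub (hQ m z)) (fun z hz => (hF' z hz).sub (hQ' m z))
      (fun z hz => sub_nonneg.mpr (hmle z hz)) (by simp)
    simp at h
    linarith
  · have h := le_of_hasDerivAt_two_nonneg (x := 1) (by norm_num) hρ
      (fun z hz => (hQ M z).sub (hF z hz)) (fun z hz => (hQ' M z).sub (hF' z hz))
      (fun z hz => sub_nonneg.mpr (hmax hz)) (by simp)
    simp at h
    linarith

lemma rpow_sub_tangent_far_lower {γ : ℝ} (hγ : 1 < γ) :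
    ∃ m : ℝ, 0 < m ∧ ∀ ρ : ℝ, 0 ≤ ρ → 1 / 2 ≤ |ρ - 1| →
      m * |ρ - 1| ^ γ ≤ ρ ^ γ - γ * ρ + γ - 1 := by
  have hγ0 : 0 < γ := by linarith
  have hcont : Continuous fun x : ℝ => x ^ γ := Real.continuous_rpow_const hγ0.le
  have hcont' : Continuous fun x : ℝ => x ^ (γ - 1) := Real.continuous_rpow_const (by linarith)
  obtain ⟨m₁, hm₁, hle₁⟩ := exists_pos_le_of_continuousOn_Icc
    (f := fun x : ℝ => x ^ γ - γ * x + γ - 1) (u := 0) (v := 1 / 2) (by norm_num)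
    (by fun_prop) (fun x hx => rpow_sub_tangent_pos hγ hx.1 (by linarith [hx.2]))
  have hinv : ∀ x : ℝ, 0 < x →
      1 - γ * x ^ (γ - 1) + (γ - 1) * x ^ γ = x ^ γ * (x⁻¹ ^ γ - γ * x⁻¹ + γ - 1) := fun x hx => by
    have := (Real.rpow_pos_of_pos hx γ).ne'
    rw [Real.inv_rpow hx.le, Real.rpow_sub_one hx.ne']
    field_simp
    ring
  -- `x = 1 / ρ` compactifies the unbounded range of `ρ`.
  obtain ⟨m₂, hm₂, hle₂⟩ := exists_pos_le_of_continuousOn_Icc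
    (f := fun x : ℝ => 1 - γ * x ^ (γ - 1) + (γ - 1) * x ^ γ) (u := 0) (v := 2 / 3) (by norm_num)
    (by fun_prop) (fun x hx => by
      rcases hx.1.eq_or_lt with rfl | hx0
      · simp [Real.zero_rpow hγ0.ne', Real.zero_rpow (sub_pos.mpr hγ).ne']
      · rw [hinv x hx0]
        refine mul_pos (Real.rpow_pos_of_pos hx0 _)
          (rpow_sub_tangent_pos hγ (inv_pos.mpr hx0).le fun h => ?_)
        rw [inv_eq_one.mp h] at hx
        norm_num at hx)
  refine ⟨min m₁ m₂, lt_min hm₁ hm₂, fun ρ hρ hfar => ?_⟩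
  have hnn : 0 ≤ |ρ - 1| ^ γ := by positivity
  rcases le_abs.mp hfar with h | h
  · have hρ0 : 0 < ρ := by linarith
    have hle : |ρ - 1| ^ γ ≤ ρ ^ γ :=
      Real.rpow_le_rpow (abs_nonneg _) (abs_le.mpr ⟨by linarith, by linarith⟩) hγ0.le
    have hk := hle₂ ρ⁻¹ ⟨(inv_pos.mpr hρ0).le, by
      rw [inv_le_comm₀ hρ0 (by norm_num)]; norm_num; linarith⟩
    beta_reduce at hk
    rw [hinv ρ⁻¹ (inv_pos.mpr hρ0), inv_inv, Real.inv_rpow hρ,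
      le_inv_mul_iff₀ (Real.rpow_pos_of_pos hρ0 γ)] at hk
    calc min m₁ m₂ * |ρ - 1| ^ γ ≤ m₂ * ρ ^ γ :=
          mul_le_mul (min_le_right _ _) hle hnn hm₂.le
      _ ≤ _ := by linarith
  · have hle : |ρ - 1| ^ γ ≤ 1 :=
      Real.rpow_le_one (abs_nonneg _) (abs_le.mpr ⟨by linarith, by linarith⟩) hγ0.le
    calc min m₁ m₂ * |ρ - 1| ^ γ ≤ m₁ * 1 :=
          mul_le_mul (min_le_left _ _) hle hnn hm₁.le
      _ ≤ _ := by simpa using hle₁ ρ ⟨hρ, by linarith⟩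

lemma rpow_sub_tangent_far_upper {γ ρ : ℝ} (hγ : 1 < γ) (hρ : 0 ≤ ρ) (hfar : 1 / 2 ≤ |ρ - 1|) :
    ρ ^ γ - γ * ρ + γ - 1 ≤ (3 ^ γ + (γ - 1) * 2 ^ γ) * |ρ - 1| ^ γ := by
  have hγ0 : 0 < γ := by linarith
  have h3 : ρ ^ γ ≤ 3 ^ γ * |ρ - 1| ^ γ := by
    rw [← Real.mul_rpow (by norm_num) (abs_nonneg _)]
    exact Real.rpow_le_rpow hρ (by linarith [le_abs_self (ρ - 1)]) hγ0.le
  have h2 : 1 ≤ 2 ^ γ * |ρ - 1| ^ γ := by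
    rw [← Real.mul_rpow (by norm_num) (abs_nonneg _)]
    exact Real.one_le_rpow (by linarith) hγ0.le
  nlinarith [mul_nonneg hγ0.le hρ, mul_le_mul_of_nonneg_left h2 (sub_pos.mpr hγ).le]


/-- For `a > 0`, `γ > 3/2`, the relative pressure potential
`P(ρ) = a(ρ^γ − γρ + γ − 1)/(γ − 1)` is comparable to `(ρ−1)²` where `|ρ−1| < 1/2`
and to `|ρ−1|^γ` where `|ρ−1| ≥ 1/2`. -/
theorem stmt_0 (a γ : ℝ) (ha : 0 < a) (hγ : 3 / 2 < γ) :
    ∃ c₁ c₂ : ℝ, 0 < c₁ ∧ 0 < c₂ ∧ ∀ ρ : ℝ, 0 ≤ ρ →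
      ((|ρ - 1| < 1 / 2 →
          c₁ * (ρ - 1) ^ 2 ≤ a * (ρ ^ γ - γ * ρ + γ - 1) / (γ - 1) ∧
          a * (ρ ^ γ - γ * ρ + γ - 1) / (γ - 1) ≤ c₂ * (ρ - 1) ^ 2) ∧
       (1 / 2 ≤ |ρ - 1| →
          c₁ * |ρ - 1| ^ γ ≤ a * (ρ ^ γ - γ * ρ + γ - 1) / (γ - 1) ∧
          a * (ρ ^ γ - γ * ρ + γ - 1) / (γ - 1) ≤ c₂ * |ρ - 1| ^ γ)) := by
  have hγ1 : 1 < γ := by linarith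
  obtain ⟨m₁, M₁, hm₁, hM₁, hnear⟩ := rpow_sub_tangent_near_one hγ1
  obtain ⟨m₂, hm₂, hfar⟩ := rpow_sub_tangent_far_lower hγ1
  set M₂ : ℝ := 3 ^ γ + (γ - 1) * 2 ^ γ
  have hk : 0 < a / (γ - 1) := div_pos ha (by linarith)
  have key : ∀ {m M m' M' q F : ℝ}, m ≤ m' → M' ≤ M → 0 ≤ q → m' * q ≤ F → F ≤ M' * q →
      a / (γ - 1) * m * q ≤ a * F / (γ - 1) ∧ a * F / (γ - 1) ≤ a / (γ - 1) * M * q := by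
    intro m M m' M' q F hm hM hq h₁ h₂
    rw [mul_div_right_comm, mul_assoc, mul_assoc]
    exact ⟨mul_le_mul_of_nonneg_left ((mul_le_mul_of_nonneg_right hm hq).trans h₁) hk.le,
      mul_le_mul_of_nonneg_left (h₂.trans (mul_le_mul_of_nonneg_right hM hq)) hk.le⟩
  refine ⟨a / (γ - 1) * min m₁ m₂, a / (γ - 1) * max M₁ M₂, mul_pos hk (lt_min hm₁ hm₂),
    mul_pos hk (lt_max_of_lt_left hM₁), fun ρ hρ => ⟨fun h => ?_, fun h => ?_⟩⟩
  · obtain ⟨hl, hr⟩ := abs_lt.mp h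
    obtain ⟨h₁, h₂⟩ := hnear ρ ⟨by linarith, by linarith⟩
    exact key (min_le_left _ _) (le_max_left _ _) (sq_nonneg _) h₁ h₂
  · exact key (min_le_right _ _) (le_max_right _ _) (by positivity) (hfar ρ hρ h)
      (rpow_sub_tangent_far_upper hγ1 hρ h)
end

section
/- Let γ > 3/2 and γ′ = γ/(γ − 1). There exists a constant c = c(γ) such that the following holds. Let ε > 0 and let ρ : ℝ³ → [0, ∞) be measurable with ‖(ρ − 1) 1_{{|ρ−1| < 1/2}}‖_{L²(ℝ³)} ≤ ε and ‖(ρ − 1) 1_{{|ρ−1| ≥ 1/2}}‖_{L^γ(ℝ³)} ≤ ε^{2/γ}. Then for every f ∈ C_c^∞(ℝ³; ℝ³): | ∫_{ℝ³} (1 − ρ(x)) |f(x)|² dx | ≤ c ε^{2/γ} ‖f‖_{L²}^{(3/γ′) − 1} ‖∇f‖_{L²}^{3(1 − 1/γ′)} + c ε ‖f‖_{L²}^{1/2} ‖∇f‖_{L²}^{3/2}. -/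
open MeasureTheory

/-- Hölder's inequality combined with interpolation between `L²` and `L⁶`. -/
theorem lintegral_enorm_mul_enorm_sq_le {α F : Type*} [MeasurableSpace α] {μ : Measure α}
    [NormedAddCommGroup F] {q : ℝ} (hq : 3 / 2 ≤ q) {g : α → ℝ} {f : α → F}
    (hg : AEStronglyMeasurable g μ) (hf : AEStronglyMeasurable f μ) :
    ∫⁻ x, ‖g x‖ₑ * ‖f x‖ₑ ^ 2 ∂μ
      ≤ eLpNorm g (ENNReal.ofReal q) μ * eLpNorm f 2 μ ^ (2 - 3 / q)
        * eLpNorm f 6 μ ^ (3 / q) := by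
  have hq0 : 0 < q := by linarith
  have hexp : 3 / q ≤ 2 := by rw [div_le_iff₀ hq0]; linarith
  have hexp0 : 0 ≤ 3 / q := by positivity
  have key := ENNReal.lintegral_prod_norm_pow_le (μ := μ) (Finset.univ : Finset (Fin 3))
    (f := ![fun x => ‖g x‖ₑ ^ q, fun x => ‖f x‖ₑ ^ (2 : ℝ), fun x => ‖f x‖ₑ ^ (6 : ℝ)])
    (by
      intro i _
      fin_cases i
      · exact hg.enorm.pow_const q
      · exact hf.enorm.pow_const 2
      · exact hf.enorm.pow_const 6)
    (p := ![1 / q, 1 - 3 / q / 2, 3 / q / 6])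
    (by simp only [Fin.sum_univ_three, Matrix.cons_val]; field_simp; ring)
    (by
      intro i _
      fin_cases i
      · exact (by positivity : 0 ≤ 1 / q)
      · exact (by linarith : 0 ≤ 1 - 3 / q / 2)
      · exact (by positivity : 0 ≤ 3 / q / 6))
  simp only [Fin.prod_univ_three, Matrix.cons_val] at key
  have hL : ∀ x, (‖g x‖ₑ ^ q) ^ (1 / q) * (‖f x‖ₑ ^ (2 : ℝ)) ^ (1 - 3 / q / 2)
      * (‖f x‖ₑ ^ (6 : ℝ)) ^ (3 / q / 6) = ‖g x‖ₑ * ‖f x‖ₑ ^ 2 := by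
    intro x
    simp only [← ENNReal.rpow_mul]
    rw [mul_one_div_cancel hq0.ne', ENNReal.rpow_one, mul_assoc,
      ← ENNReal.rpow_add_of_nonneg _ _ (by linarith) (by positivity), ← ENNReal.rpow_natCast]
    congr 2
    push_cast
    ring
  simp only [hL] at key
  refine key.trans_eq ?_
  rw [eLpNorm_eq_lintegral_rpow_enorm_toReal (by simpa using hq0) (by simp),
    eLpNorm_eq_lintegral_rpow_enorm_toReal (by simp) (by simp),
    eLpNorm_eq_lintegral_rpow_enorm_toReal (p := 6) (by simp) (by simp),
    ← ENNReal.rpow_mul, ← ENNReal.rpow_mul, ENNReal.toReal_ofReal hq0.le]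
  simp only [ENNReal.toReal_ofNat]
  congr 3 <;> ring

/-- The Gagliardo–Nirenberg form of `lintegral_enorm_mul_enorm_sq_le` on `ℝ³`. -/
theorem exists_lintegral_enorm_mul_enorm_sq_le :
    ∃ C : ℝ, 0 ≤ C ∧ ∀ q : ℝ, 3 / 2 ≤ q → ∀ g : EuclideanSpace ℝ (Fin 3) → ℝ, Measurable g →
      ∀ M : ℝ, 0 ≤ M → eLpNorm g (ENNReal.ofReal q) volume ≤ ENNReal.ofReal M →
      ∀ f : EuclideanSpace ℝ (Fin 3) → EuclideanSpace ℝ (Fin 3),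
        ContDiff ℝ (⊤ : ℕ∞) f → HasCompactSupport f →
        ∫⁻ x, ‖g x‖ₑ * ‖f x‖ₑ ^ 2 ≤ ENNReal.ofReal (C ^ (3 / q) * M
          * (eLpNorm f 2 volume).toReal ^ (2 - 3 / q)
          * (eLpNorm (fun x => ‖fderiv ℝ f x‖) 2 volume).toReal ^ (3 / q)) := by
  refine ⟨eLpNormLESNormFDerivOfEqInnerConst
    (volume : Measure (EuclideanSpace ℝ (Fin 3))) 2, NNReal.coe_nonneg _, ?_⟩
  intro q hq g hg M hM hgM f hf hfc
  set K := eLpNormLESNormFDerivOfEqInnerConst (volume : Measure (EuclideanSpace ℝ (Fin 3))) 2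
  have hexp : 3 / q ≤ 2 := by rw [div_le_iff₀ (by linarith)]; linarith
  have hexp0 : 0 ≤ 3 / q := div_nonneg (by norm_num) (by linarith)
  have hsob : eLpNorm f 6 volume ≤ K * eLpNorm (fun x => ‖fderiv ℝ f x‖) 2 volume := by
    rw [eLpNorm_norm]
    exact_mod_cast eLpNorm_le_eLpNorm_fderiv_of_eq_inner volume
      (hf.of_le (by exact_mod_cast le_top)) hfc (p := 2) (p' := 6) (by norm_num)
      (by simp) (by simp; norm_num)
  have hfin : eLpNorm f 2 volume ≠ ⊤ :=
    (hf.continuous.memLp_of_hasCompactSupport hfc).eLpNorm_ne_top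
  have hdfin : eLpNorm (fun x => ‖fderiv ℝ f x‖) 2 volume ≠ ⊤ := by
    rw [eLpNorm_norm]
    exact ((hf.continuous_fderiv (by simp)).memLp_of_hasCompactSupport
      (hfc.fderiv ℝ)).eLpNorm_ne_top
  calc ∫⁻ x, ‖g x‖ₑ * ‖f x‖ₑ ^ 2
      ≤ eLpNorm g (ENNReal.ofReal q) volume * eLpNorm f 2 volume ^ (2 - 3 / q)
        * eLpNorm f 6 volume ^ (3 / q) :=
        lintegral_enorm_mul_enorm_sq_le hq hg.aestronglyMeasurable
          hf.continuous.aestronglyMeasurable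
    _ ≤ ENNReal.ofReal M * eLpNorm f 2 volume ^ (2 - 3 / q)
        * (K * eLpNorm (fun x => ‖fderiv ℝ f x‖) 2 volume) ^ (3 / q) := by gcongr
    _ = _ := by
      rw [mul_assoc, mul_assoc, mul_assoc, ENNReal.mul_rpow_of_nonneg _ _ hexp0,
        ENNReal.ofReal_mul (by positivity), ENNReal.ofReal_mul hM,
        ENNReal.ofReal_mul (by positivity),
        ← ENNReal.ofReal_rpow_of_nonneg K.coe_nonneg hexp0,
        ← ENNReal.ofReal_rpow_of_nonneg ENNReal.toReal_nonneg (by linarith),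
        ← ENNReal.ofReal_rpow_of_nonneg ENNReal.toReal_nonneg hexp0,
        ENNReal.ofReal_toReal hfin, ENNReal.ofReal_toReal hdfin, ENNReal.ofReal_coe_nnreal]
      ring

/-- With `γ > 3/2` and `γ′ = γ/(γ−1)`, if
`‖(ρ−1)1_{|ρ−1|<1/2}‖_{L²} ≤ ε` and `‖(ρ−1)1_{|ρ−1|≥1/2}‖_{L^γ} ≤ ε^{2/γ}`, then for every
`f ∈ C_c^∞(ℝ³;ℝ³)`:
`|∫ (1−ρ)|f|² dx| ≤ c ε^{2/γ} ‖f‖_{L²}^{(3/γ′)−1} ‖∇f‖_{L²}^{3(1−1/γ′)} + c ε ‖f‖_{L²}^{1/2} ‖∇f‖_{L²}^{3/2}`. -/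
theorem stmt_10 (γ : ℝ) (hγ : 3 / 2 < γ) :
    ∃ c : ℝ, 0 < c ∧ ∀ ε : ℝ, 0 < ε →
      ∀ ρ : EuclideanSpace ℝ (Fin 3) → ℝ, Measurable ρ → (∀ x, 0 ≤ ρ x) →
      eLpNorm ({x | |ρ x - 1| < 1 / 2}.indicator fun x => ρ x - 1) 2 volume
          ≤ ENNReal.ofReal ε →
      eLpNorm ({x | 1 / 2 ≤ |ρ x - 1|}.indicator fun x => ρ x - 1) (ENNReal.ofReal γ) volume
          ≤ ENNReal.ofReal (ε ^ (2 / γ)) →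
      ∀ f : EuclideanSpace ℝ (Fin 3) → EuclideanSpace ℝ (Fin 3),
        ContDiff ℝ (⊤ : ℕ∞) f → HasCompactSupport f →
        |∫ x, (1 - ρ x) * ‖f x‖ ^ 2|
          ≤ c * ε ^ (2 / γ)
              * (eLpNorm f 2 volume).toReal ^ (3 / (γ / (γ - 1)) - 1)
              * (eLpNorm (fun x => ‖fderiv ℝ f x‖) 2 volume).toReal
                  ^ (3 * (1 - 1 / (γ / (γ - 1))))
            + c * ε * (eLpNorm f 2 volume).toReal ^ ((1 : ℝ) / 2)
              * (eLpNorm (fun x => ‖fderiv ℝ f x‖) 2 volume).toReal ^ ((3 : ℝ) / 2) := by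
  obtain ⟨C, hC, key⟩ := exists_lintegral_enorm_mul_enorm_sq_le
  refine ⟨C ^ (3 / γ) + C ^ ((3 : ℝ) / 2) + 1, by positivity, ?_⟩
  intro ε hε ρ hρ _ hsmall hlarge f hf hfc
  have hγ0 : 0 < γ := by linarith
  have hγ1 : γ - 1 ≠ 0 := by linarith
  have hexp₁ : 3 / (γ / (γ - 1)) - 1 = 2 - 3 / γ := by field_simp; ring
  have hexp₂ : 3 * (1 - 1 / (γ / (γ - 1))) = 3 / γ := by field_simp; ring
  rw [hexp₁, hexp₂]
  set a := (eLpNorm f 2 volume).toReal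
  set d := (eLpNorm (fun x => ‖fderiv ℝ f x‖) 2 volume).toReal
  have ha : 0 ≤ a := ENNReal.toReal_nonneg
  have hd : 0 ≤ d := ENNReal.toReal_nonneg
  have hdist : Measurable fun x => |ρ x - 1| := (hρ.sub_const 1).abs
  have hm₁ : Measurable ({x | |ρ x - 1| < 1 / 2}.indicator fun x => ρ x - 1) :=
    (hρ.sub_const 1).indicator (measurableSet_lt hdist measurable_const)
  have hm₂ : Measurable ({x | 1 / 2 ≤ |ρ x - 1|}.indicator fun x => ρ x - 1) :=
    (hρ.sub_const 1).indicator (measurableSet_le measurable_const hdist)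
  have h₁ := key 2 (by norm_num) _ hm₁ ε hε.le (by simpa using hsmall) f hf hfc
  have h₂ := key γ hγ.le _ hm₂ (ε ^ (2 / γ)) (by positivity) hlarge f hf hfc
  rw [show (2 : ℝ) - 3 / 2 = 1 / 2 by norm_num] at h₁
  have hsplit : ∀ x, ‖(1 - ρ x) * ‖f x‖ ^ 2‖ₑ
      = ‖{x | |ρ x - 1| < 1 / 2}.indicator (fun x => ρ x - 1) x‖ₑ * ‖f x‖ₑ ^ 2
        + ‖{x | 1 / 2 ≤ |ρ x - 1|}.indicator (fun x => ρ x - 1) x‖ₑ * ‖f x‖ₑ ^ 2 := by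
    intro x
    rw [enorm_mul, enorm_pow, enorm_norm, ← enorm_neg (1 - ρ x), neg_sub]
    by_cases hx : |ρ x - 1| < 1 / 2
    · simp only [Set.indicator, Set.mem_ofPred_eq, hx, not_le.mpr hx, if_true, if_false]
      simp
    · simp only [Set.indicator, Set.mem_ofPred_eq, hx, not_lt.mp hx, if_true, if_false]
      simp
  have hbound : ‖∫ x, (1 - ρ x) * ‖f x‖ ^ 2‖ₑ ≤ ENNReal.ofReal
      (C ^ ((3 : ℝ) / 2) * ε * a ^ ((1 : ℝ) / 2) * d ^ ((3 : ℝ) / 2)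
        + C ^ (3 / γ) * ε ^ (2 / γ) * a ^ (2 - 3 / γ) * d ^ (3 / γ)) := by
    refine (enorm_integral_le_lintegral_enorm _).trans ?_
    simp only [hsplit]
    rw [lintegral_add_left (hm₁.enorm.fun_mul (hf.continuous.measurable.enorm.pow_const 2)),
      ENNReal.ofReal_add (by positivity) (by positivity)]
    exact add_le_add h₁ h₂
  rw [← ofReal_norm, ENNReal.ofReal_le_ofReal_iff (by positivity),
    Real.norm_eq_abs] at hbound
  refine hbound.trans ?_
  rw [add_comm]
  have hC₁ : 0 ≤ C ^ (3 / γ) := by positivity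
  have hC₂ : 0 ≤ C ^ ((3 : ℝ) / 2) := by positivity
  gcongr <;> linarith
end

section
/- Let γ > 3/2. There exists a constant C = C(γ) such that the following holds. Let ε ∈ (0, 1], let ρ : ℝ³ → [0, ∞) be measurable with ‖(ρ − 1) 1_{{|ρ−1| < 1/2}}‖_{L²(ℝ³)} ≤ ε and ‖(ρ − 1) 1_{{|ρ−1| ≥ 1/2}}‖_{L^γ(ℝ³)} ≤ ε^{2/γ}, and let f ∈ C_c^∞(ℝ³; ℝ³) satisfy ∫_{ℝ³} ρ |f|² dx ≤ 1 and ∫_{ℝ³} |∇f|² dx ≤ 1. Then ∫_{ℝ³} |f|² dx ≤ C. -/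
open MeasureTheory

open scoped ENNReal NNReal

/-- The square of the `L²` norm as a lower Lebesgue integral. -/
lemma sq_eLpNorm_two_eq_lintegral {α F : Type*} [MeasurableSpace α] [NormedAddCommGroup F]
    (μ : Measure α) (g : α → F) : eLpNorm g 2 μ ^ 2 = ∫⁻ x, ‖g x‖ₑ ^ 2 ∂μ := by
  have h := eLpNorm_nnreal_pow_eq_lintegral (f := g) (μ := μ) (p := 2) two_ne_zero
  simpa using h

/-- The lower integral of the squared norm of a continuous compactly supported function is
its Bochner integral. -/
lemma lintegral_sq_enorm_eq_ofReal_integral {E F : Type*} [TopologicalSpace E]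
    [MeasurableSpace E] [OpensMeasurableSpace E] [NormedAddCommGroup F]
    (μ : Measure E) [IsFiniteMeasureOnCompacts μ] {g : E → F} (hg : Continuous g)
    (hc : HasCompactSupport g) :
    ∫⁻ x, ‖g x‖ₑ ^ 2 ∂μ = ENNReal.ofReal (∫ x, ‖g x‖ ^ 2 ∂μ) := by
  have hsupp : HasCompactSupport (fun x => ‖g x‖ ^ 2) :=
    hc.comp_left (g := fun y : F => ‖y‖ ^ 2) (by simp)
  have hcont : Continuous (fun x => ‖g x‖ ^ 2) := by fun_prop
  have hint : Integrable (fun x => ‖g x‖ ^ 2) μ := hcont.integrable_of_hasCompactSupport hsupp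
  rw [ofReal_integral_eq_lintegral_ofReal hint (.of_forall fun x => by positivity)]
  refine lintegral_congr fun x => ?_
  rw [ENNReal.ofReal_pow (norm_nonneg _), ofReal_norm]

/-- Chebyshev's inequality for the set where `|h| ≥ 1/2`. -/
lemma measure_half_le_abs_le {α : Type*} [MeasurableSpace α] (μ : Measure α) {h : α → ℝ}
    (hh : Measurable h) {γ : ℝ} (hγ : 0 < γ)
    (hle : eLpNorm ({x | 1 / 2 ≤ |h x|}.indicator h) (ENNReal.ofReal γ) μ ≤ 1) :
    μ {x | 1 / 2 ≤ |h x|} ≤ 2 ^ γ := by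
  have hB : MeasurableSet {x | 1 / 2 ≤ |h x|} := measurableSet_le measurable_const hh.abs
  have key := meas_ge_le_mul_pow_eLpNorm_enorm μ (p := ENNReal.ofReal γ) (by simpa using hγ)
    ENNReal.ofReal_ne_top (hh.indicator hB).aestronglyMeasurable (ε := 2⁻¹) (by simp)
    (by simp)
  rw [inv_inv, ENNReal.toReal_ofReal hγ.le] at key
  calc μ {x | 1 / 2 ≤ |h x|}
      ≤ μ {x | 2⁻¹ ≤ ‖({x | 1 / 2 ≤ |h x|}.indicator h) x‖ₑ} := by
        refine measure_mono fun x hx => ?_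
        rw [Set.mem_ofPred_eq, Set.indicator_of_mem hx, Real.enorm_eq_ofReal_abs]
        have h2 : (2⁻¹ : ℝ≥0∞) = ENNReal.ofReal (1 / 2) := by
          rw [one_div, ENNReal.ofReal_inv_of_pos two_pos, ENNReal.ofReal_ofNat]
        rw [h2]
        exact ENNReal.ofReal_le_ofReal hx
    _ ≤ 2 ^ γ * _ ^ γ := key
    _ ≤ 2 ^ γ * 1 ^ γ := by gcongr
    _ = 2 ^ γ := by simp

/-- On a set where `ρ ≥ 1/2`, the `L²` mass is controlled by the `ρ`-weighted mass. -/
lemma setLIntegral_sq_enorm_le_two_mul {α F : Type*} [MeasurableSpace α] [NormedAddCommGroup F]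
    (μ : Measure α) {s : Set α} (hs : MeasurableSet s) {ρ : α → ℝ} (hρ : ∀ x ∈ s, 1 / 2 ≤ ρ x)
    (f : α → F) :
    ∫⁻ x in s, ‖f x‖ₑ ^ 2 ∂μ ≤ 2 * ∫⁻ x, ENNReal.ofReal (ρ x * ‖f x‖ ^ 2) ∂μ := by
  calc ∫⁻ x in s, ‖f x‖ₑ ^ 2 ∂μ
      ≤ ∫⁻ x in s, 2 * ENNReal.ofReal (ρ x * ‖f x‖ ^ 2) ∂μ := by
        refine setLIntegral_mono' hs fun x hx => ?_
        rw [← ofReal_norm, ← ENNReal.ofReal_pow (norm_nonneg _), ← ENNReal.ofReal_ofNat 2,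
          ← ENNReal.ofReal_mul (by norm_num)]
        refine ENNReal.ofReal_le_ofReal ?_
        nlinarith [hρ x hx, sq_nonneg ‖f x‖]
    _ = 2 * ∫⁻ x in s, ENNReal.ofReal (ρ x * ‖f x‖ ^ 2) ∂μ :=
        lintegral_const_mul' _ _ (by simp)
    _ ≤ _ := by gcongr; exact Measure.restrict_le_self

/-- With `γ > 3/2`, if `ε ∈ (0,1]`, `ρ ≥ 0` satisfies
`‖(ρ−1)1_{|ρ−1|<1/2}‖_{L²} ≤ ε` and `‖(ρ−1)1_{|ρ−1|≥1/2}‖_{L^γ} ≤ ε^{2/γ}`,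
and `f ∈ C_c^∞(ℝ³;ℝ³)` satisfies `∫ ρ|f|² ≤ 1` and `∫ |∇f|² ≤ 1`, then `∫ |f|² ≤ C(γ)`. -/
theorem stmt_11 (γ : ℝ) (hγ : 3 / 2 < γ) :
    ∃ C : ℝ, 0 < C ∧ ∀ ε : ℝ, ε ∈ Set.Ioc (0 : ℝ) 1 →
      ∀ ρ : EuclideanSpace ℝ (Fin 3) → ℝ, Measurable ρ → (∀ x, 0 ≤ ρ x) →
      eLpNorm ({x | |ρ x - 1| < 1 / 2}.indicator fun x => ρ x - 1) 2 volume
          ≤ ENNReal.ofReal ε →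
      eLpNorm ({x | 1 / 2 ≤ |ρ x - 1|}.indicator fun x => ρ x - 1) (ENNReal.ofReal γ) volume
          ≤ ENNReal.ofReal (ε ^ (2 / γ)) →
      ∀ f : EuclideanSpace ℝ (Fin 3) → EuclideanSpace ℝ (Fin 3),
        ContDiff ℝ (⊤ : ℕ∞) f → HasCompactSupport f →
        (∫⁻ x, ENNReal.ofReal (ρ x * ‖f x‖ ^ 2)) ≤ 1 →
        (∫ x, ‖fderiv ℝ f x‖ ^ 2) ≤ 1 →
        (∫ x, ‖f x‖ ^ 2) ≤ C := by
  set K : ℝ≥0 := eLpNormLESNormFDerivOfEqInnerConst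
    (volume : Measure (EuclideanSpace ℝ (Fin 3))) 2
  set D : ℝ≥0∞ := 2 + (K * (2 ^ γ) ^ (1 / 3 : ℝ)) ^ 2
  have hD : D ≠ ∞ := by finiteness
  have hγ0 : 0 < γ := by linarith
  refine ⟨D.toReal, ENNReal.toReal_pos (by simp [D]) hD, ?_⟩
  intro ε hε ρ hρm hρ0 _ hρB f hf hfc hfρ hdf
  set B : Set (EuclideanSpace ℝ (Fin 3)) := {x | 1 / 2 ≤ |ρ x - 1|} with hBdef
  have hB : MeasurableSet B := measurableSet_le measurable_const (hρm.sub_const 1).abs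
  have hvol : volume B ≤ 2 ^ γ := by
    refine measure_half_le_abs_le volume (hρm.sub_const 1) hγ0 (hρB.trans ?_)
    rw [ENNReal.ofReal_le_one]
    exact Real.rpow_le_one hε.1.le hε.2 (by positivity)
  have hgrad : eLpNorm (fderiv ℝ f) 2 volume ≤ 1 := by
    have h : eLpNorm (fderiv ℝ f) 2 volume ^ 2 ≤ 1 := by
      rw [sq_eLpNorm_two_eq_lintegral, lintegral_sq_enorm_eq_ofReal_integral volume
        (hf.continuous_fderiv (by simp)) (hfc.fderiv ℝ), ENNReal.ofReal_le_one]
      exact hdf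
    exact (pow_le_one_iff two_ne_zero).1 h
  have hsob : eLpNorm f 6 volume ≤ K := by
    have h := eLpNorm_le_eLpNorm_fderiv_of_eq_inner volume (hf.of_le (by simp)) hfc
      (p := 2) (p' := 6) (by norm_num) (by simp) (by simp; norm_num)
    calc eLpNorm f 6 volume ≤ K * eLpNorm (fderiv ℝ f) 2 volume := by simpa using h
      _ ≤ K * 1 := by gcongr
      _ = K := mul_one _
  have hbad : ∫⁻ x in B, ‖f x‖ₑ ^ 2 ≤ (K * (2 ^ γ) ^ (1 / 3 : ℝ)) ^ 2 := by
    rw [← sq_eLpNorm_two_eq_lintegral]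
    gcongr
    have h := eLpNorm_le_eLpNorm_mul_rpow_measure_univ (p := 2) (q := 6) (μ := volume.restrict B)
      (by norm_num) hf.continuous.aestronglyMeasurable (f := f)
    have hexp : 1 / (2 : ℝ≥0∞).toReal - 1 / (6 : ℝ≥0∞).toReal = 1 / 3 := by norm_num
    rw [hexp, Measure.restrict_apply_univ] at h
    refine h.trans ?_
    gcongr
    exact (eLpNorm_mono_measure _ Measure.restrict_le_self).trans hsob
  have hgood : ∫⁻ x in Bᶜ, ‖f x‖ₑ ^ 2 ≤ 2 := by
    refine (setLIntegral_sq_enorm_le_two_mul volume hB.compl (ρ := ρ) (fun x hx => ?_) f).trans ?_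
    · have hx' : |ρ x - 1| < 1 / 2 := by simpa [hBdef] using hx
      linarith [(abs_lt.1 hx').1]
    · calc _ ≤ 2 * (1 : ℝ≥0∞) := by gcongr
        _ = 2 := mul_one _
  rw [← ENNReal.ofReal_le_iff_le_toReal hD,
    ← lintegral_sq_enorm_eq_ofReal_integral volume hf.continuous hfc,
    ← lintegral_add_compl _ hB, add_comm]
  exact add_le_add hgood hbad
end

section
/- Let γ > 3/2. There exists a constant C = C(γ) such that the following holds. Let ε ∈ (0, 1] and let ρ : ℝ³ → [0, ∞) be measurable with ∫_E |ρ(x) − 1|^γ dx ≤ ε², where E := {x ∈ ℝ³ : |ρ(x) − 1| ≥ 1/2}. Then the Lebesgue measure of E is at most 2^γ ε², and for every f ∈ C_c^∞(ℝ³; ℝ³): ∫_E |f(x)|² dx ≤ C ε^{4/3} ∫_{ℝ³} |∇f(x)|² dx. -/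
open MeasureTheory

/-- The integral of the squared norm is the square of the `L²` norm. -/
theorem integral_norm_sq_eq_eLpNorm_toReal_sq {α F : Type*} [MeasurableSpace α]
    [NormedAddCommGroup F] {μ : Measure α} {g : α → F} (hg : MemLp g 2 μ) :
    ∫ x, ‖g x‖ ^ 2 ∂μ = (eLpNorm g 2 μ).toReal ^ 2 := by
  have hnonneg : 0 ≤ ∫ x, ‖g x‖ ^ 2 ∂μ := integral_nonneg fun x => by positivity
  rw [hg.eLpNorm_eq_integral_rpow_norm two_ne_zero ENNReal.ofNat_ne_top]
  simp only [ENNReal.toReal_ofNat, Real.rpow_two]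
  rw [ENNReal.toReal_ofReal (Real.rpow_nonneg hnonneg _), ← Real.rpow_natCast,
    ← Real.rpow_mul hnonneg]
  norm_num

/-- Chebyshev's inequality for the `γ`-th moment of `|g|` on the set where `|g| ≥ 1/2`. -/
theorem volume_half_le_abs_le {α : Type*} [MeasurableSpace α] {μ : Measure α} {g : α → ℝ}
    (hg : Measurable g) {γ M : ℝ} (hγ : 0 ≤ γ)
    (hM : (∫⁻ x in {x | 1 / 2 ≤ |g x|}, ENNReal.ofReal (|g x| ^ γ) ∂μ) ≤ ENNReal.ofReal M) :
    μ {x | 1 / 2 ≤ |g x|} ≤ ENNReal.ofReal ((2 : ℝ) ^ γ * M) := by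
  have hE : MeasurableSet {x | 1 / 2 ≤ |g x|} :=
    measurableSet_le measurable_const (by fun_prop)
  have htwo : (0 : ℝ) ≤ 2 ^ γ := by positivity
  calc μ {x | 1 / 2 ≤ |g x|}
      = ∫⁻ _ in {x | 1 / 2 ≤ |g x|}, 1 ∂μ := by simp
    _ ≤ ∫⁻ x in {x | 1 / 2 ≤ |g x|}, ENNReal.ofReal (2 ^ γ) * ENNReal.ofReal (|g x| ^ γ) ∂μ := by
        refine setLIntegral_mono' hE fun x hx => ?_
        rw [← ENNReal.ofReal_mul htwo, ← Real.mul_rpow zero_le_two (abs_nonneg _),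
          ENNReal.one_le_ofReal]
        refine Real.one_le_rpow ?_ hγ
        have : 1 / 2 ≤ |g x| := hx
        linarith
    _ = ENNReal.ofReal (2 ^ γ) *
          ∫⁻ x in {x | 1 / 2 ≤ |g x|}, ENNReal.ofReal (|g x| ^ γ) ∂μ :=
        lintegral_const_mul' _ _ ENNReal.ofReal_ne_top
    _ ≤ ENNReal.ofReal (2 ^ γ) * ENNReal.ofReal M := by gcongr
    _ = ENNReal.ofReal (2 ^ γ * M) := (ENNReal.ofReal_mul htwo).symm

/-- On a set of finite measure in `ℝ³`, Hölder's and Sobolev's inequalities control the `L²` norm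
of a compactly supported function by that of its gradient. -/
theorem exists_setIntegral_norm_sq_le_measure_rpow_mul_integral_fderiv :
    ∃ K : ℝ, 0 < K ∧ ∀ (E : Set (EuclideanSpace ℝ (Fin 3))) (m : ℝ), 0 ≤ m →
      volume E ≤ ENNReal.ofReal m →
      ∀ f : EuclideanSpace ℝ (Fin 3) → EuclideanSpace ℝ (Fin 3),
        ContDiff ℝ 1 f → HasCompactSupport f →
        ∫ x in E, ‖f x‖ ^ 2 ≤ K * m ^ ((2 : ℝ) / 3) * ∫ x, ‖fderiv ℝ f x‖ ^ 2 := by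
  set S : NNReal := eLpNormLESNormFDerivOfEqInnerConst
    (volume : Measure (EuclideanSpace ℝ (Fin 3))) (2 : NNReal)
  refine ⟨(S : ℝ) ^ 2 + 1, by positivity, fun E m hm hE f hf hfs => ?_⟩
  have hfLp : MemLp f 2 (volume.restrict E) :=
    (hf.continuous.memLp_of_hasCompactSupport hfs).restrict E
  have hdLp : MemLp (fderiv ℝ f) 2 volume :=
    (hf.continuous_fderiv one_ne_zero).memLp_of_hasCompactSupport (hfs.fderiv ℝ)
  have hsob : eLpNorm f 6 volume ≤ S * eLpNorm (fderiv ℝ f) 2 volume := by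
    have := eLpNorm_le_eLpNorm_fderiv_of_eq_inner
      (volume : Measure (EuclideanSpace ℝ (Fin 3))) hf hfs (p := 2) (p' := 6)
      one_le_two (by simp) (by simp; norm_num)
    exact_mod_cast this
  have hholder : eLpNorm f 2 (volume.restrict E) ≤
      S * eLpNorm (fderiv ℝ f) 2 volume * ENNReal.ofReal (m ^ ((1 : ℝ) / 3)) := by
    refine (eLpNorm_le_eLpNorm_mul_rpow_measure_univ (p := 2) (q := 6) (by norm_num)
      hfLp.aestronglyMeasurable).trans ?_
    rw [Measure.restrict_apply_univ, ← ENNReal.ofReal_rpow_of_nonneg hm (by norm_num)]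
    have hexp : 1 / (2 : ENNReal).toReal - 1 / (6 : ENNReal).toReal = (1 : ℝ) / 3 := by
      norm_num
    rw [hexp]
    gcongr
    exact (eLpNorm_mono_measure f Measure.restrict_le_self).trans hsob
  have hreal : (eLpNorm f 2 (volume.restrict E)).toReal ≤
      S * (eLpNorm (fderiv ℝ f) 2 volume).toReal * m ^ ((1 : ℝ) / 3) := by
    have := ENNReal.toReal_mono (ENNReal.mul_ne_top
      (ENNReal.mul_ne_top ENNReal.coe_ne_top hdLp.eLpNorm_ne_top) ENNReal.ofReal_ne_top) hholder
    rwa [ENNReal.toReal_mul, ENNReal.toReal_mul, ENNReal.coe_toReal,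
      ENNReal.toReal_ofReal (by positivity)] at this
  rw [integral_norm_sq_eq_eLpNorm_toReal_sq hfLp, integral_norm_sq_eq_eLpNorm_toReal_sq hdLp]
  have hpow : (m ^ ((1 : ℝ) / 3)) ^ 2 = m ^ ((2 : ℝ) / 3) := by
    rw [← Real.rpow_natCast, ← Real.rpow_mul hm]
    norm_num
  calc (eLpNorm f 2 (volume.restrict E)).toReal ^ 2
      ≤ (S * (eLpNorm (fderiv ℝ f) 2 volume).toReal * m ^ ((1 : ℝ) / 3)) ^ 2 := by gcongr
    _ = (S : ℝ) ^ 2 * m ^ ((2 : ℝ) / 3) * (eLpNorm (fderiv ℝ f) 2 volume).toReal ^ 2 := by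
        rw [← hpow]; ring
    _ ≤ _ := by
        gcongr
        linarith

/-- With `γ > 3/2`, there is `C = C(γ)` such that if `ε ∈ (0,1]` and
`∫_E |ρ−1|^γ ≤ ε²` where `E = {|ρ−1| ≥ 1/2}`, then `|E| ≤ 2^γ ε²` and for every
`f ∈ C_c^∞(ℝ³;ℝ³)`: `∫_E |f|² ≤ C ε^{4/3} ∫ |∇f|²`. -/
theorem stmt_13 (γ : ℝ) (hγ : 3 / 2 < γ) :
    ∃ C : ℝ, 0 < C ∧ ∀ ε : ℝ, ε ∈ Set.Ioc (0 : ℝ) 1 →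
      ∀ ρ : EuclideanSpace ℝ (Fin 3) → ℝ, Measurable ρ → (∀ x, 0 ≤ ρ x) →
      (∫⁻ x in {x | 1 / 2 ≤ |ρ x - 1|}, ENNReal.ofReal (|ρ x - 1| ^ γ))
          ≤ ENNReal.ofReal (ε ^ 2) →
      volume {x | 1 / 2 ≤ |ρ x - 1|} ≤ ENNReal.ofReal ((2 : ℝ) ^ γ * ε ^ 2) ∧
      ∀ f : EuclideanSpace ℝ (Fin 3) → EuclideanSpace ℝ (Fin 3),
        ContDiff ℝ (⊤ : ℕ∞) f → HasCompactSupport f →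
        (∫ x in {x | 1 / 2 ≤ |ρ x - 1|}, ‖f x‖ ^ 2)
          ≤ C * ε ^ ((4 : ℝ) / 3) * ∫ x, ‖fderiv ℝ f x‖ ^ 2 := by
  obtain ⟨K, hK, hbound⟩ := exists_setIntegral_norm_sq_le_measure_rpow_mul_integral_fderiv
  refine ⟨K * ((2 : ℝ) ^ γ) ^ ((2 : ℝ) / 3), by positivity, fun ε hε ρ hρ _ hint => ?_⟩
  have hvol := volume_half_le_abs_le (hρ.sub_const 1) (by linarith) hint
  refine ⟨hvol, fun f hf hfs => ?_⟩
  have hmain := hbound _ _ (by positivity) hvol f (hf.of_le (by exact_mod_cast le_top)) hfs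
  have hpow : (ε ^ 2) ^ ((2 : ℝ) / 3) = ε ^ ((4 : ℝ) / 3) := by
    rw [← Real.rpow_natCast, ← Real.rpow_mul hε.1.le]
    norm_num
  rwa [Real.mul_rpow (by positivity) (by positivity), hpow, ← mul_assoc] at hmain
end
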